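/- arXiv:0709.3803 — 2 statements merged into one kernel-verified Lean document; each statement's English description precedes it below -/
import Mathlib

section
/- Let k be an algebraically closed field, H a group, V a finite-dimensional k-vector space, and ρ : H → GL(V) a representation. Equip End_k(V) with the H-action h·f = ρ(h) ∘ f ∘ ρ(h)^{-1} (this H-module is isomorphic to V ⊗ V*). If End_k(V) is a semisimple H-module, then V is a semisimple H-module. -/
/-- A `k`-submodule `p` of `V` is an `H`-submodule (subrepresentation) for the
representation `ρ` if it is stable under the action of every element of `H`. -/
def IsSubrep {k S V : Type*} [CommRing k] [Group S] [AddCommGroup V] [Module k V]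
    (ρ : Representation k S V) (p : Submodule k V) : Prop :=
  ∀ (s : S), ∀ v ∈ p, ρ s v ∈ p

/-- A representation is semisimple if every submodule stable under the group action
has a stable direct complement. -/
def IsSemisimpleRep {k S V : Type*} [CommRing k] [Group S] [AddCommGroup V] [Module k V]
    (ρ : Representation k S V) : Prop :=
  ∀ p : Submodule k V, IsSubrep ρ p → ∃ q : Submodule k V, IsSubrep ρ q ∧ IsCompl p q

/-!
Let `p ≤ V` be stable and let `K ≤ End V` be the stable submodule of maps that send `V` into `p`
and kill `p`. Any two projections onto `p` differ by an element of `K`, and conjugating by `H`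
permutes these projections, so the class of a projection modulo `K` is invariant. By semisimplicity
of `End V` it contains an invariant representative, and the kernel of this equivariant projection is
a stable complement of `p`.

Over a field a linear projection onto `p` always exists. Over a commutative ring `k` it exists
because `V` is semisimple as a `k`-module: the invariants of `End V` are a semisimple `k`-module,
and `V` is the sum of their images under the evaluation maps `f ↦ f v`, as `v = id v`.
-/

section

open LinearMap Submodule

variable {k H V W : Type*} [CommRing k] [Group H] [AddCommGroup V] [Module k V]
  [AddCommGroup W] [Module k W] {ρ : Representation k H V} {σ : Representation k H W}

namespace IsSubrep

theorem inf {p q : Submodule k V} (hp : IsSubrep ρ p) (hq : IsSubrep ρ q) :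
    IsSubrep ρ (p ⊓ q) :=
  fun s v hv ↦ ⟨hp s v hv.1, hq s v hv.2⟩

theorem of_le_invariants {p : Submodule k V} (hp : p ≤ ρ.invariants) : IsSubrep ρ p :=
  fun s _ hv ↦ (hp hv s).symm ▸ hv

theorem compatibleMaps {p : Submodule k V} {q : Submodule k W}
    (hp : IsSubrep ρ p) (hq : IsSubrep σ q) :
    IsSubrep (ρ.linHom σ) (compatibleMaps p q) :=
  fun s _ hf v hv ↦ hq s _ (hf (hp s⁻¹ v hv))

theorem ker_of_isIntertwiningMap {f : V →ₗ[k] W} (hf : ρ.IsIntertwiningMap σ f) :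
    IsSubrep ρ (ker f) := by
  intro s v hv
  rw [mem_ker] at hv ⊢
  rw [hf.isIntertwining, hv, map_zero]

end IsSubrep

section Projections

variable {p : Submodule k V}

/-- The linear endomorphisms of `V` that map `V` into `p` and vanish on `p`. If `p` has a
complement, these are exactly the differences of two projections onto `p`. -/
def projDifferences (p : Submodule k V) : Submodule k (V →ₗ[k] V) :=
  compatibleMaps ⊤ p ⊓ compatibleMaps p ⊥

theorem mem_projDifferences {f : V →ₗ[k] V} :
    f ∈ projDifferences p ↔ (∀ v, f v ∈ p) ∧ ∀ v ∈ p, f v = 0 :=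
  ⟨fun hf ↦ ⟨fun _ ↦ hf.1 mem_top, fun _ hv ↦ hf.2 hv⟩, fun hf ↦ ⟨fun v _ ↦ hf.1 v, hf.2⟩⟩

theorem isProj_iff_sub_mem_projDifferences {f g : V →ₗ[k] V} (hf : IsProj p f) :
    IsProj p g ↔ f - g ∈ projDifferences p := by
  have map_mem_iff (v : V) : f v - g v ∈ p ↔ g v ∈ p := by
    rw [p.sub_mem_iff_right (hf.map_mem v)]
  have map_eq_iff (v : V) (hv : v ∈ p) : f v - g v = 0 ↔ g v = v := by
    rw [hf.map_id v hv, sub_eq_zero, eq_comm]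
  simp only [mem_projDifferences, LinearMap.sub_apply, map_mem_iff]
  exact ⟨fun hg ↦ ⟨hg.map_mem, fun v hv ↦ (map_eq_iff v hv).2 (hg.map_id v hv)⟩,
    fun hg ↦ ⟨hg.1, fun v hv ↦ (map_eq_iff v hv).1 (hg.2 v hv)⟩⟩

theorem IsSubrep.projDifferences (hp : IsSubrep ρ p) :
    IsSubrep (ρ.linHom ρ) (projDifferences p) :=
  .inf (.compatibleMaps (fun _ _ _ ↦ mem_top) hp)
    (.compatibleMaps hp (.of_le_invariants bot_le))

theorem IsSubrep.isProj_linHom (hp : IsSubrep ρ p) {f : V →ₗ[k] V} (hf : IsProj p f) (s : H) :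
    IsProj p (ρ.linHom ρ s f) where
  map_mem v := hp s _ (hf.map_mem _)
  map_id v hv := by simp [hf.map_id _ (hp s⁻¹ v hv)]

end Projections

namespace IsSemisimpleRep

theorem exists_mem_invariants_sub_mem (hρ : IsSemisimpleRep ρ) {p : Submodule k V}
    (hp : IsSubrep ρ p) {v : V} (hv : ∀ s, ρ s v - v ∈ p) :
    ∃ w ∈ ρ.invariants, v - w ∈ p := by
  obtain ⟨q, hq, hpq⟩ := hρ p hp
  obtain ⟨a, ha, w, hw, rfl⟩ := mem_sup.1 (hpq.sup_eq_top ▸ mem_top : v ∈ p ⊔ q)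
  refine ⟨w, fun s ↦ ?_, by simpa using ha⟩
  have mem_p : ρ s w - w ∈ p := by
    have : ρ s w - w = (ρ s (a + w) - (a + w)) - (ρ s a - a) := by rw [map_add]; abel
    exact this ▸ p.sub_mem (hv s) (p.sub_mem (hp s a ha) ha)
  have mem_q : ρ s w - w ∈ q := q.sub_mem (hq s w hw) hw
  exact sub_eq_zero.1 (disjoint_def.1 hpq.disjoint _ mem_p mem_q)

theorem isSemisimpleModule_invariants (hρ : IsSemisimpleRep ρ) :
    IsSemisimpleModule k ρ.invariants where
  exists_isCompl p := by
    have hp : p.map ρ.invariants.subtype ≤ ρ.invariants := map_subtype_le _ p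
    obtain ⟨q, -, hpq⟩ := hρ _ (.of_le_invariants hp)
    have := isCompl_comap_subtype_of_isCompl_of_le hpq hp
    rw [comap_map_eq_of_injective ρ.invariants.injective_subtype] at this
    exact ⟨_, this⟩

theorem isSemisimpleModule_of_linHom (hρ : IsSemisimpleRep (ρ.linHom ρ)) :
    IsSemisimpleModule k V := by
  have := hρ.isSemisimpleModule_invariants
  let eval (v : V) : (ρ.linHom ρ).invariants →ₗ[k] V := applyₗ v ∘ₗ Submodule.subtype _
  have id_mem : LinearMap.id ∈ (ρ.linHom ρ).invariants := fun s ↦ by ext; simp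
  have iSup_range_eval : ⨆ v, range (eval v) = ⊤ :=
    eq_top_iff.2 fun v _ ↦ mem_iSup_of_mem v ⟨⟨LinearMap.id, id_mem⟩, rfl⟩
  exact isSemisimpleModule_of_isSemisimpleModule_submodule'
    (fun v ↦ IsSemisimpleModule.range (eval v)) iSup_range_eval

theorem exists_isProj_isIntertwiningMap (hρ : IsSemisimpleRep (ρ.linHom ρ)) {p : Submodule k V}
    (hp : IsSubrep ρ p) : ∃ f : V →ₗ[k] V, IsProj p f ∧ ρ.IsIntertwiningMap ρ f := by
  have := hρ.isSemisimpleModule_of_linHom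
  obtain ⟨q, hpq⟩ := exists_isCompl p
  have hπ : IsProj p (p.projection q hpq) :=
    ⟨projection_apply_mem hpq, fun _ ↦ projection_apply_of_mem_left hpq⟩
  obtain ⟨f, hf, hπf⟩ := hρ.exists_mem_invariants_sub_mem hp.projDifferences fun s ↦
    (isProj_iff_sub_mem_projDifferences (hp.isProj_linHom hπ s)).1 hπ
  exact ⟨f, (isProj_iff_sub_mem_projDifferences hπ).2 hπf,
    (Representation.mem_linHom_invariants_iff_isIntertwining f).1 hf⟩

end IsSemisimpleRep

end

theorem stmt_3_general {k H V : Type*} [CommRing k] [Group H] [AddCommGroup V] [Module k V]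
    (ρ : Representation k H V) (hss : IsSemisimpleRep (ρ.linHom ρ)) :
    IsSemisimpleRep ρ := by
  intro p hp
  obtain ⟨f, hfp, hf⟩ := hss.exists_isProj_isIntertwiningMap hp
  exact ⟨LinearMap.ker f, .ker_of_isIntertwiningMap hf, hfp.isCompl⟩

/-- let `k` be algebraically closed, `V` a finite-dimensional
`k`-vector space and `ρ` a representation of the group `H` on `V`.  Equip
`End_k(V) = V →ₗ[k] V` with the conjugation action `h · f = ρ h ∘ f ∘ ρ h⁻¹`
(the representation `ρ.linHom ρ`, isomorphic to `V ⊗ V*`).  If `End_k(V)` is a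
semisimple `H`-module, then `V` is a semisimple `H`-module. -/
theorem stmt_3 {k H V : Type*} [Field k] [IsAlgClosed k] [Group H]
    [AddCommGroup V] [Module k V] [FiniteDimensional k V]
    (ρ : Representation k H V)
    (hss : IsSemisimpleRep (ρ.linHom ρ)) :
    IsSemisimpleRep ρ :=
  stmt_3_general ρ hss
end

section
/- Let k be a field, V a finite-dimensional k-vector space equipped with a k-linear action of a group S, and let S₁ ⊆ S₂ ⊆ ⋯ be an ascending sequence of subgroups of S with ⋃_{i≥1} S_i = S. Then there exists N such that for every i ≥ N: every S_i-submodule of V is an S-submodule; in particular V^{S_i} = V^S, and V is a semisimple S_i-module if and only if V is a semisimple S-module. -/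
/-- The submodule `V^S` of `S`-fixed vectors of the representation `ρ`. -/
def fixedSubmodule {k S V : Type*} [CommRing k] [Group S] [AddCommGroup V] [Module k V]
    (ρ : Representation k S V) : Submodule k V where
  carrier := {v | ∀ s : S, ρ s v = v}
  add_mem' := by
    intro a b ha hb s
    rw [map_add, ha s, hb s]
  zero_mem' := fun s => map_zero (ρ s)
  smul_mem' := by
    intro c v hv s
    rw [map_smul, hv s]

/-!
Since `V` is Noetherian, so is `End V`, hence the span of all displacements `ρ s - 1` is already
spanned by those of a finite subset of `S`. That finite subset lies in `S_i` for all large `i`, and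
then every condition of the form `ρ s v - v ∈ p` needs to be checked only for `s ∈ S_i`. Taking `p`
with `v ∈ p` gives stability of `p`, and `p = 0` gives invariance of `v`; the latter is why
displacements are used and not the operators `ρ s` themselves.
-/

theorem eventually_finset_subset_of_monotone {α ι : Type*} [Preorder ι] {A : ι → Set α}
    (hmono : Monotone A) (hunion : ∀ x, ∃ i, x ∈ A i) (F : Finset α) :
    ∀ᶠ i in Filter.atTop, (F : Set α) ⊆ A i := by
  refine (Filter.eventually_all_finset F).mpr fun x _ ↦ ?_
  obtain ⟨j, hj⟩ := hunion x
  exact (Filter.eventually_ge_atTop j).mono fun i hji ↦ hmono hji hj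

section

variable {k S V : Type*} [CommRing k] [Group S] [AddCommGroup V] [Module k V]
  {ρ : Representation k S V}

/-- The displacement operators `ρ s - 1` of all `s : S` lie in the `k`-span of those of `X`, i.e.
the elements `x - 1` with `x ∈ X` span the image of the augmentation ideal of `k[S]` in `End V`.
This is the condition under which `X` detects stable submodules and fixed vectors. -/
def SpansDisplacements (ρ : Representation k S V) (X : Set S) : Prop :=
  ∀ s : S, ρ s - 1 ∈ Submodule.span k ((fun x ↦ ρ x - 1) '' X)

theorem exists_finset_spansDisplacements [IsNoetherian k V] (ρ : Representation k S V) :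
    ∃ F : Finset S, SpansDisplacements ρ F := by
  classical
  obtain ⟨D, hD, hspan⟩ := (Submodule.fg_span_iff_fg_span_finset_subset _).mp
    (IsNoetherian.noetherian (Submodule.span k ((fun s ↦ ρ s - 1) '' Set.univ)))
  obtain ⟨F, -, rfl⟩ := Finset.subset_set_image_iff.mp hD
  refine ⟨F, fun s ↦ ?_⟩
  rw [← Finset.coe_image, ← hspan]
  exact Submodule.subset_span ⟨s, Set.mem_univ s, rfl⟩

namespace SpansDisplacements

theorem mono {X Y : Set S} (hX : SpansDisplacements ρ X) (hXY : X ⊆ Y) :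
    SpansDisplacements ρ Y :=
  fun s ↦ Submodule.span_mono (Set.image_mono hXY) (hX s)

theorem sub_mem {X : Set S} (hX : SpansDisplacements ρ X) {p : Submodule k V} {v : V}
    (hv : ∀ x ∈ X, ρ x v - v ∈ p) (s : S) : ρ s v - v ∈ p := by
  have span_le_comap : Submodule.span k ((fun x ↦ ρ x - 1) '' X) ≤
      p.comap (LinearMap.applyₗ v) :=
    Submodule.span_le.mpr (Set.image_subset_iff.mpr hv)
  exact span_le_comap (hX s)

variable {T : Subgroup S}

theorem isSubrep_restrict_iff (hT : SpansDisplacements ρ T) {p : Submodule k V} :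
    IsSubrep (ρ.comp T.subtype) p ↔ IsSubrep ρ p := by
  refine ⟨fun hp s v hv ↦ ?_, fun hp t ↦ hp t⟩
  have displacement_mem : ρ s v - v ∈ p :=
    hT.sub_mem (fun t ht ↦ p.sub_mem (hp ⟨t, ht⟩ v hv) hv) s
  exact (p.sub_mem_iff_left hv).mp displacement_mem

theorem fixedSubmodule_restrict (hT : SpansDisplacements ρ T) :
    fixedSubmodule (ρ.comp T.subtype) = fixedSubmodule ρ := by
  refine le_antisymm (fun v hv s ↦ ?_) (fun v hv t ↦ hv t)
  have displacement_mem_bot : ρ s v - v ∈ (⊥ : Submodule k V) :=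
    hT.sub_mem (fun t ht ↦ sub_eq_zero.mpr (hv ⟨t, ht⟩)) s
  exact sub_eq_zero.mp displacement_mem_bot

theorem isSemisimpleRep_restrict_iff (hT : SpansDisplacements ρ T) :
    IsSemisimpleRep (ρ.comp T.subtype) ↔ IsSemisimpleRep ρ := by
  simp only [IsSemisimpleRep, hT.isSubrep_restrict_iff]

end SpansDisplacements

theorem stmt_10_general {ι : Type*} [Preorder ι] [IsDirectedOrder ι] [IsNoetherian k V]
    (ρ : Representation k S V) (Si : ι → Subgroup S) (hmono : Monotone Si)
    (hunion : ∀ s : S, ∃ i, s ∈ Si i) :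
    ∃ N : ι, ∀ i ≥ N,
      (∀ p : Submodule k V, IsSubrep (ρ.comp (Si i).subtype) p → IsSubrep ρ p) ∧
      fixedSubmodule (ρ.comp (Si i).subtype) = fixedSubmodule ρ ∧
      (IsSemisimpleRep (ρ.comp (Si i).subtype) ↔ IsSemisimpleRep ρ) := by
  have : Nonempty ι := (hunion 1).nonempty
  obtain ⟨F, hF⟩ := exists_finset_spansDisplacements ρ
  obtain ⟨N, hN⟩ := Filter.eventually_atTop.mp <|
    eventually_finset_subset_of_monotone (SetLike.coe_mono.comp hmono) hunion F
  refine ⟨N, fun i hi ↦ ?_⟩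
  have hSi : SpansDisplacements ρ (Si i) := hF.mono (hN i hi)
  exact ⟨fun _ ↦ hSi.isSubrep_restrict_iff.mp, hSi.fixedSubmodule_restrict,
    hSi.isSemisimpleRep_restrict_iff⟩

end

/-- for a finite-dimensional representation `V` of `S` and an
ascending sequence of subgroups `S₁ ⊆ S₂ ⊆ ⋯` of `S` with union `S`, there is an
`N` such that for all `i ≥ N` every `S_i`-submodule of `V` is an `S`-submodule;
in particular `V^{S_i} = V^S`, and `V` is `S_i`-semisimple iff it is
`S`-semisimple. -/
theorem stmt_10 {k S V : Type*} [Field k] [Group S] [AddCommGroup V] [Module k V]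
    [FiniteDimensional k V] (ρ : Representation k S V)
    (Si : ℕ → Subgroup S) (hmono : Monotone Si) (hunion : ∀ s : S, ∃ i, s ∈ Si i) :
    ∃ N : ℕ, ∀ i ≥ N,
      (∀ p : Submodule k V, IsSubrep (ρ.comp (Si i).subtype) p → IsSubrep ρ p) ∧
      fixedSubmodule (ρ.comp (Si i).subtype) = fixedSubmodule ρ ∧
      (IsSemisimpleRep (ρ.comp (Si i).subtype) ↔ IsSemisimpleRep ρ) :=
  stmt_10_general ρ Si hmono hunion
end
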